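/- arXiv:1909.05758 — 2 statements merged into one kernel-verified Lean document; each statement's English description precedes it below -/
import Mathlib

section
/- Let X and Y be positive definite n×n complex matrices. Then the matrix-valued function γ ↦ (−1/γ)·(G_γ(X, Y) − X) tends to D_op(X, Y) as γ → 0 over nonzero real γ. -/
/-!
With `C = X^{-1/2} Y X^{-1/2}`, the congruence `M ↦ X^{1/2} M X^{1/2}` sends `C^γ` to `G_γ(X, Y)`
and `C⁰ = 1` to `X`, so the limit is the image of `-log C`, the negative of the derivative of
`γ ↦ C^γ` at `0`. Since `X^{1/2} Y⁻¹ X^{1/2} = C⁻¹` and `log C⁻¹ = -log C`, this image is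
`D_op(X, Y)`. The derivative of `γ ↦ C^γ` is computed eigenvalue by eigenvalue: the spectrum is
finite, so pointwise convergence of functions on it is uniform and passes through the continuous
functional calculus.
-/

open Matrix Kronecker ComplexOrder

/-- The Loewner order: `A ≤ B` iff `B - A` is positive semidefinite. -/
def Loewner {n : Type*} [Fintype n] (A B : Matrix n n ℂ) : Prop := (B - A).PosSemidef

/-- Real matrix power via the spectral decomposition, with the convention `0 ^ β = 0`
(so negative powers are Moore–Penrose pseudo-inverses on the support); defined to be `0`
on non-Hermitian matrices. -/
noncomputable def mpow {n : Type*} [Fintype n] [DecidableEq n] (A : Matrix n n ℂ) (β : ℝ) :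
    Matrix n n ℂ :=
  if hA : A.IsHermitian then
    (hA.eigenvectorUnitary : Matrix n n ℂ) *
      Matrix.diagonal (fun i =>
        (Complex.ofReal (if hA.eigenvalues i = 0 then 0 else (hA.eigenvalues i) ^ β))) *
      (star (hA.eigenvectorUnitary : Matrix n n ℂ))
  else 0

/-- Matrix logarithm via the spectral decomposition (with `Real.log 0 = 0` on the kernel);
defined to be `0` on non-Hermitian matrices. -/
noncomputable def mlog {n : Type*} [Fintype n] [DecidableEq n] (A : Matrix n n ℂ) :
    Matrix n n ℂ :=
  if hA : A.IsHermitian then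
    (hA.eigenvectorUnitary : Matrix n n ℂ) *
      Matrix.diagonal (fun i => (Complex.ofReal (Real.log (hA.eigenvalues i)))) *
      (star (hA.eigenvectorUnitary : Matrix n n ℂ))
  else 0

/-- Weighted matrix geometric mean `G_β(X,Y) = X^{1/2} (X^{-1/2} Y X^{-1/2})^β X^{1/2}`. -/
noncomputable def geomMean {n : Type*} [Fintype n] [DecidableEq n] (β : ℝ)
    (X Y : Matrix n n ℂ) : Matrix n n ℂ :=
  mpow X (1/2) * mpow (mpow X (-(1/2)) * Y * mpow X (-(1/2))) β * mpow X (1/2)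

/-- Operator relative entropy `D_op(X,Y) = X^{1/2} log(X^{1/2} Y⁻¹ X^{1/2}) X^{1/2}`. -/
noncomputable def Dop {n : Type*} [Fintype n] [DecidableEq n] (X Y : Matrix n n ℂ) :
    Matrix n n ℂ :=
  mpow X (1/2) * mlog (mpow X (1/2) * Y⁻¹ * mpow X (1/2)) * mpow X (1/2)

/-- Geometric Rényi divergence `D̂_α(ρ‖σ) = (α-1)⁻¹ log tr G_{1-α}(ρ,σ)`. -/
noncomputable def Dhat {n : Type*} [Fintype n] [DecidableEq n] (α : ℝ)
    (ρ σ : Matrix n n ℂ) : ℝ :=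
  (α - 1)⁻¹ * Real.log ((geomMean (1 - α) ρ σ).trace.re)

/-- Max-relative entropy `D_max(ρ‖σ) = log inf {t : ρ ≤ t σ}`. -/
noncomputable def Dmax {n : Type*} [Fintype n] (ρ σ : Matrix n n ℂ) : ℝ :=
  Real.log (sInf {t : ℝ | Loewner ρ (t • σ)})

/-- Umegaki relative entropy `D(ρ‖σ) = tr[ρ (log ρ - log σ)]`. -/
noncomputable def Dum {n : Type*} [Fintype n] [DecidableEq n] (ρ σ : Matrix n n ℂ) : ℝ :=
  ((ρ * (mlog ρ - mlog σ)).trace).re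

/-- Sandwiched Rényi divergence. -/
noncomputable def Dsand {n : Type*} [Fintype n] [DecidableEq n] (α : ℝ)
    (ρ σ : Matrix n n ℂ) : ℝ :=
  (α - 1)⁻¹ *
    Real.log ((mpow (mpow σ ((1 - α)/(2*α)) * ρ * mpow σ ((1 - α)/(2*α))) α).trace.re)

/-- Petz Rényi divergence. -/
noncomputable def Dpetz {n : Type*} [Fintype n] [DecidableEq n] (α : ℝ)
    (ρ σ : Matrix n n ℂ) : ℝ :=
  (α - 1)⁻¹ * Real.log ((mpow ρ α * mpow σ (1 - α)).trace.re)

/-- Partial trace over the second tensor factor. -/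
noncomputable def ptrB {A B : Type*} [Fintype B] (M : Matrix (A × B) (A × B) ℂ) :
    Matrix A A ℂ :=
  Matrix.of fun a a' => ∑ b, M (a, b) (a', b)

/-- Partial transpose on the second tensor factor. -/
def ptB {A B : Type*} (M : Matrix (A × B) (A × B) ℂ) : Matrix (A × B) (A × B) ℂ :=
  Matrix.of fun x y => M (x.1, y.2) (y.1, x.2)

/-- Largest eigenvalue of a Hermitian matrix (`0` on non-Hermitian matrices). -/
noncomputable def lamMax {n : Type*} [Fintype n] [DecidableEq n] (M : Matrix n n ℂ) : ℝ :=
  if hM : M.IsHermitian then ⨆ i, hM.eigenvalues i else 0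

/-- The action `Λ_J(ρ)` on the `A`-subsystem of the CP map with Choi matrix `J`. -/
noncomputable def chanApply {R A B : Type*} [Fintype A] (J : Matrix (A × B) (A × B) ℂ)
    (ρ : Matrix (R × A) (R × A) ℂ) : Matrix (R × B) (R × B) ℂ :=
  Matrix.of fun x y => ∑ a, ∑ a', ρ (x.1, a) (y.1, a') * J (a, x.2) (a', y.2)

/-- Cone of separable operators: finite sums of Kronecker products of PSD matrices. -/
def SEPcone (A B : Type*) [Fintype A] [Fintype B] : Set (Matrix (A × B) (A × B) ℂ) :=
  { M | ∃ (k : ℕ) (P : Fin k → Matrix A A ℂ) (Q : Fin k → Matrix B B ℂ),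
      (∀ i, (P i).PosSemidef) ∧ (∀ i, (Q i).PosSemidef) ∧ M = ∑ i, (P i) ⊗ₖ (Q i) }

/-- Trace norm `‖X‖₁ = tr √(X* X)`. -/
noncomputable def traceNorm {n : Type*} [Fintype n] [DecidableEq n] (X : Matrix n n ℂ) : ℝ :=
  ((mpow (Xᴴ * X) (1/2)).trace).re

/-- Moore–Penrose pseudo-inverse of a PSD matrix. -/
noncomputable def mpinv {n : Type*} [Fintype n] [DecidableEq n] (M : Matrix n n ℂ) :
    Matrix n n ℂ :=
  mpow M (-1)

/-- Link product of Choi matrices (Choi matrix of the composed map). -/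
noncomputable def linkProd {A B C : Type*} [Fintype B] (J₁ : Matrix (A × B) (A × B) ℂ)
    (J₂ : Matrix (B × C) (B × C) ℂ) : Matrix (A × C) (A × C) ℂ :=
  Matrix.of fun x y => ∑ b, ∑ b', J₁ (x.1, b) (y.1, b') * J₂ (b, x.2) (b', y.2)

open Filter Topology

theorem tendstoUniformlyOn_of_finite {ι α β : Type*} [UniformSpace β] {F : ι → α → β} {f : α → β}
    {l : Filter ι} {s : Set α} (hs : s.Finite) (h : ∀ x ∈ s, Tendsto (F · x) l (𝓝 (f x))) :
    TendstoUniformlyOn F f l s := fun _ hu =>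
  (eventually_all_finite hs).2 fun x hx => Uniform.tendsto_nhds_right.1 (h x hx) hu

theorem tendsto_cfc_of_finite_spectrum {ι R A : Type*} {p : A → Prop} [CommSemiring R]
    [StarRing R] [MetricSpace R] [IsTopologicalSemiring R] [ContinuousStar R] [Ring A] [StarRing A]
    [TopologicalSpace A] [Algebra R A] [ContinuousFunctionalCalculus R A p] {l : Filter ι}
    {F : ι → R → R} {f : R → R} {a : A} (ha : (spectrum R a).Finite)
    (h : ∀ x ∈ spectrum R a, Tendsto (F · x) l (𝓝 (f x))) :
    Tendsto (fun i => cfc (F i) a) l (𝓝 (cfc f a)) :=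
  tendsto_cfc_fun (tendstoUniformlyOn_of_finite ha h) (.of_forall fun _ => ha.continuousOn _)

theorem tendsto_slope_const_rpow_zero {x : ℝ} (hx : 0 < x) :
    Tendsto (fun γ : ℝ => γ⁻¹ * (x ^ γ - 1)) (𝓝[≠] 0) (𝓝 (Real.log x)) := by
  simpa using (Real.hasStrictDerivAt_const_rpow hx 0).hasDerivAt.tendsto_slope_zero

section MatrixFunctions

open scoped MatrixOrder

variable {n : Type*} [Fintype n] [DecidableEq n] {A : Matrix n n ℂ}

theorem continuousOn_real_spectrum {E : Type*} [TopologicalSpace E] (f : ℝ → E)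
    (A : Matrix n n ℂ) : ContinuousOn f (spectrum ℝ A) :=
  Matrix.finite_real_spectrum.continuousOn f

theorem mlog_eq_cfc (hA : A.IsHermitian) : mlog A = cfc Real.log A := by
  rw [mlog, dif_pos hA, hA.cfc_eq]
  rfl

theorem mlog_inv (hA : A.IsHermitian) (hu : IsUnit A) : mlog A⁻¹ = -mlog A := by
  obtain ⟨u, rfl⟩ := hu
  calc mlog (u : Matrix n n ℂ)⁻¹ = cfc Real.log (↑u⁻¹ : Matrix n n ℂ) := by
        rw [mlog_eq_cfc hA.inv, Matrix.coe_units_inv]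
    _ = cfc (fun x => Real.log x⁻¹) (u : Matrix n n ℂ) :=
        (cfc_comp_inv Real.log u ((Matrix.finite_real_spectrum.image _).continuousOn _) hA).symm
    _ = -mlog (u : Matrix n n ℂ) := by
        simp only [Real.log_inv, cfc_neg, mlog_eq_cfc hA]

theorem mpow_eq_cfc (hA : A.IsHermitian) (β : ℝ) :
    mpow A β = cfc (fun x : ℝ => if x = 0 then 0 else x ^ β) A := by
  rw [mpow, dif_pos hA, hA.cfc_eq]
  rfl

theorem isHermitian_mpow (A : Matrix n n ℂ) (β : ℝ) : (mpow A β).IsHermitian := by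
  by_cases hA : A.IsHermitian
  · rw [mpow_eq_cfc hA]
    exact cfc_predicate _ A
  · rw [mpow, dif_neg hA]
    exact Matrix.isHermitian_zero

theorem mpow_one (hA : A.IsHermitian) : mpow A 1 = A := by
  rw [mpow_eq_cfc hA]
  refine (cfc_congr fun x _ => ?_).trans (cfc_id ℝ A hA)
  simp +contextual [eq_comm]

theorem mpow_zero (hA : A.IsHermitian) (hu : IsUnit A) : mpow A 0 = 1 := by
  rw [mpow_eq_cfc hA, ← cfc_const_one ℝ A hA]
  refine cfc_congr fun x hx => ?_
  have hx0 : x ≠ 0 := ne_of_mem_of_not_mem hx (spectrum.zero_notMem ℝ hu)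
  simp [hx0]

theorem mpow_add (hA : A.PosSemidef) (β γ : ℝ) : mpow A (β + γ) = mpow A β * mpow A γ := by
  simp only [mpow_eq_cfc hA.isHermitian]
  rw [← cfc_mul _ _ A (continuousOn_real_spectrum _ A) (continuousOn_real_spectrum _ A)]
  refine cfc_congr fun x hx => ?_
  rcases (spectrum_nonneg_of_nonneg hA.nonneg hx).eq_or_lt with rfl | hx0
  · simp
  · simp [hx0.ne', Real.rpow_add hx0]

theorem mpow_half_mul_self (hA : A.PosSemidef) : mpow A (1/2) * mpow A (1/2) = A := by
  rw [← mpow_add hA, add_halves, mpow_one hA.isHermitian]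

theorem mpow_mul_mpow_neg (hA : A.PosDef) (β : ℝ) : mpow A β * mpow A (-β) = 1 := by
  rw [← mpow_add hA.posSemidef, add_neg_cancel, mpow_zero hA.isHermitian hA.isUnit]

theorem mpow_neg (hA : A.PosDef) (β : ℝ) : mpow A (-β) = (mpow A β)⁻¹ :=
  (Matrix.inv_eq_right_inv (mpow_mul_mpow_neg hA β)).symm

theorem isUnit_mpow (hA : A.PosDef) (β : ℝ) : IsUnit (mpow A β) :=
  .of_mul_eq_one _ (mpow_mul_mpow_neg hA β)

theorem tendsto_slope_mpow_zero (hA : A.PosSemidef) :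
    Tendsto (fun γ : ℝ => γ⁻¹ • (mpow A γ - mpow A 0)) (𝓝[≠] 0) (𝓝 (mlog A)) := by
  have hcont (f : ℝ → ℝ) := continuousOn_real_spectrum f A
  simp only [mpow_eq_cfc hA.isHermitian, mlog_eq_cfc hA.isHermitian,
    ← cfc_sub _ _ A (hcont _) (hcont _), ← cfc_smul _ _ A (hcont _)]
  refine tendsto_cfc_of_finite_spectrum Matrix.finite_real_spectrum fun x hx => ?_
  rcases (spectrum_nonneg_of_nonneg hA.nonneg hx).eq_or_lt with rfl | hx0
  · simp
  · simpa [hx0.ne'] using tendsto_slope_const_rpow_zero hx0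

end MatrixFunctions

section GeometricMean

variable {n : Type*} [Fintype n] [DecidableEq n] {X Y : Matrix n n ℂ}

theorem posSemidef_mpow_mul_mul_mpow (X : Matrix n n ℂ) (hY : Y.PosSemidef) (β : ℝ) :
    (mpow X β * Y * mpow X β).PosSemidef := by
  simpa only [(isHermitian_mpow X β).eq] using hY.mul_mul_conjTranspose_same (mpow X β)

theorem posDef_mpow_mul_mul_mpow (hX : X.PosDef) (hY : Y.PosDef) (β : ℝ) :
    (mpow X β * Y * mpow X β).PosDef := by
  have hconj := (isUnit_mpow hX β).posDef_star_left_conjugate_iff.2 hY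
  rwa [Matrix.star_eq_conjTranspose, isHermitian_mpow] at hconj

theorem geomMean_zero (hX : X.PosDef) (hY : Y.PosDef) : geomMean 0 X Y = X := by
  have hC := posDef_mpow_mul_mul_mpow hX hY (-(1/2))
  rw [geomMean, mpow_zero hC.isHermitian hC.isUnit, Matrix.mul_one,
    mpow_half_mul_self hX.posSemidef]

theorem geomMean_sub_geomMean (β γ : ℝ) (X Y : Matrix n n ℂ) :
    geomMean β X Y - geomMean γ X Y =
      mpow X (1/2) * (mpow (mpow X (-(1/2)) * Y * mpow X (-(1/2))) β -
        mpow (mpow X (-(1/2)) * Y * mpow X (-(1/2))) γ) * mpow X (1/2) := by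
  rw [Matrix.mul_sub, Matrix.sub_mul, geomMean, geomMean]

theorem tendsto_slope_geomMean_zero (X : Matrix n n ℂ) (hY : Y.PosSemidef) :
    Tendsto (fun γ : ℝ => γ⁻¹ • (geomMean γ X Y - geomMean 0 X Y)) (𝓝[≠] 0)
      (𝓝 (mpow X (1/2) * mlog (mpow X (-(1/2)) * Y * mpow X (-(1/2))) * mpow X (1/2))) := by
  have hC := posSemidef_mpow_mul_mul_mpow X hY (-(1/2))
  have hlim := ((tendsto_slope_mpow_zero hC).const_mul (mpow X (1/2))).mul_const (mpow X (1/2))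
  refine hlim.congr fun γ => ?_
  rw [geomMean_sub_geomMean, Matrix.mul_smul, Matrix.smul_mul]

theorem inv_mpow_neg_mul_mul_mpow_neg (hX : X.PosDef) (Y : Matrix n n ℂ) (β : ℝ) :
    (mpow X (-β) * Y * mpow X (-β))⁻¹ = mpow X β * Y⁻¹ * mpow X β := by
  rw [Matrix.mul_inv_rev, Matrix.mul_inv_rev, ← mpow_neg hX, neg_neg, Matrix.mul_assoc]

theorem Dop_eq_neg (hX : X.PosDef) (hY : Y.PosDef) :
    Dop X Y =
      -(mpow X (1/2) * mlog (mpow X (-(1/2)) * Y * mpow X (-(1/2))) * mpow X (1/2)) := by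
  have hC := posDef_mpow_mul_mul_mpow hX hY (-(1/2))
  rw [Dop, ← inv_mpow_neg_mul_mul_mpow_neg hX, mlog_inv hC.isHermitian hC.isUnit,
    Matrix.mul_neg, Matrix.neg_mul]

end GeometricMean

/-- `(−1/γ)·(G_γ(X,Y) − X) → D_op(X,Y)` as `γ → 0` over nonzero real `γ`,
for positive definite `X, Y`. -/
theorem geomMean_tendsto_Dop {n : Type*} [Fintype n] [DecidableEq n]
    (X Y : Matrix n n ℂ) (hX : X.PosDef) (hY : Y.PosDef) :
    Filter.Tendsto (fun γ : ℝ => (-γ⁻¹) • (geomMean γ X Y - X))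
      (nhdsWithin 0 {(0 : ℝ)}ᶜ) (nhds (Dop X Y)) := by
  have hlim := (tendsto_slope_geomMean_zero X hY.posSemidef).neg
  simpa only [geomMean_zero hX hY, ← neg_smul, ← Dop_eq_neg hX hY] using hlim
end

section
/- Let A and B be finite types and let J be a positive semidefinite matrix indexed by (A×B)×(A×B). Define υ(J) := inf{ tr S : S Hermitian on B, and there exist matrices K, R on (A×B)×(A×B) with K − J, R + K^{T_B}, R − K^{T_B}, I_A ⊗ S + R^{T_B}, I_A ⊗ S − R^{T_B} all positive semidefinite }, β(J) := inf{ tr S : S Hermitian on B, and there exists R with R + J^{T_B}, R − J^{T_B}, I_A ⊗ S + R^{T_B}, I_A ⊗ S − R^{T_B} all positive semidefinite }, and ζ(J) := inf{ tr S : S Hermitian on B, and there exists K with K − J, I_A ⊗ S + K^{T_B}, I_A ⊗ S − K^{T_B} all positive semidefinite }. Then υ(J) ≤ β(J) and υ(J) ≤ ζ(J). (This gives Υ_max(𝒩) ≤ min{C_β(𝒩), C_ζ(𝒩)} at the level of the semidefinite-program values, where J is the Choi matrix of 𝒩.) -/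
open Matrix Kronecker ComplexOrder

/-- The SDP value `υ(J)` underlying the Upsilon-information `Υ_max`. -/
noncomputable def upsilonVal {A B : Type*} [Fintype A] [DecidableEq A]
    [Fintype B] [DecidableEq B] (J : Matrix (A × B) (A × B) ℂ) : ℝ :=
  sInf {x : ℝ | ∃ S : Matrix B B ℂ, S.IsHermitian ∧ x = S.trace.re ∧
    ∃ K R : Matrix (A × B) (A × B) ℂ, (K - J).PosSemidef ∧
      (R + ptB K).PosSemidef ∧ (R - ptB K).PosSemidef ∧
      ((1 : Matrix A A ℂ) ⊗ₖ S + ptB R).PosSemidef ∧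
      ((1 : Matrix A A ℂ) ⊗ₖ S - ptB R).PosSemidef}

/-- The SDP value `β(J)` underlying the strong converse bound `C_β`. -/
noncomputable def betaVal {A B : Type*} [Fintype A] [DecidableEq A]
    [Fintype B] [DecidableEq B] (J : Matrix (A × B) (A × B) ℂ) : ℝ :=
  sInf {x : ℝ | ∃ S : Matrix B B ℂ, S.IsHermitian ∧ x = S.trace.re ∧
    ∃ R : Matrix (A × B) (A × B) ℂ,
      (R + ptB J).PosSemidef ∧ (R - ptB J).PosSemidef ∧
      ((1 : Matrix A A ℂ) ⊗ₖ S + ptB R).PosSemidef ∧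
      ((1 : Matrix A A ℂ) ⊗ₖ S - ptB R).PosSemidef}

/-- The SDP value `ζ(J)` underlying the strong converse bound `C_ζ`. -/
noncomputable def zetaVal {A B : Type*} [Fintype A] [DecidableEq A]
    [Fintype B] [DecidableEq B] (J : Matrix (A × B) (A × B) ℂ) : ℝ :=
  sInf {x : ℝ | ∃ S : Matrix B B ℂ, S.IsHermitian ∧ x = S.trace.re ∧
    ∃ K : Matrix (A × B) (A × B) ℂ, (K - J).PosSemidef ∧
      ((1 : Matrix A A ℂ) ⊗ₖ S + ptB K).PosSemidef ∧
      ((1 : Matrix A A ℂ) ⊗ₖ S - ptB K).PosSemidef}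

/-!
The constraints of `β(J)` are a two-layer bound: `-R ≤ J^{T_B} ≤ R` and
`-(1 ⊗ S) ≤ R^{T_B} ≤ 1 ⊗ S`. As `υ(J)` is the infimum of `β(K)` over `J ≤ K`, the choice `K = J`
gives `υ(J) ≤ β(J)`. The one-layer bound `-(1 ⊗ S) ≤ K^{T_B} ≤ 1 ⊗ S` of `ζ(J)` becomes a
two-layer one by inserting `R = 1 ⊗ S`: its partial transpose `1 ⊗ Sᵀ` is bounded by itself,
and `tr Sᵀ = tr S`.

Infima in `ℝ` are monotone only for nonempty sets that are bounded below. A large multiple of `1`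
bounds any Hermitian matrix, and for `A` nonempty `1 ⊗ S ≥ 0` forces `tr S ≥ 0`. For `A` empty the
feasible traces can be unbounded below, but then every semidefinite constraint is vacuous and the
three feasible sets coincide.
-/

section PosSemidef

variable {m n R : Type*} [Ring R] [PartialOrder R] [StarRing R]

lemma posSemidef_of_isEmpty [IsEmpty n] (M : Matrix n n R) : M.PosSemidef :=
  Subsingleton.elim 0 M ▸ .zero

lemma posSemidef_of_one_kronecker [DecidableEq m] [Nonempty m] {S : Matrix n n R}
    (h : ((1 : Matrix m m R) ⊗ₖ S).PosSemidef) : S.PosSemidef := by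
  obtain ⟨a⟩ := ‹Nonempty m›
  have hblock : ((1 : Matrix m m R) ⊗ₖ S).submatrix (a, ·) (a, ·) = S := by
    ext i j
    simp
  exact hblock ▸ h.submatrix (a, ·)

end PosSemidef

section RCLike

variable {n 𝕜 : Type*} [RCLike 𝕜]

lemma posSemidef_of_add_of_sub {X Y : Matrix n n 𝕜} (hadd : (X + Y).PosSemidef)
    (hsub : (X - Y).PosSemidef) : X.PosSemidef := by
  have h := (hadd.add hsub).smul (by positivity : (0 : ℝ) ≤ 2⁻¹)
  rwa [add_add_sub_cancel, ← two_smul ℝ X, inv_smul_smul₀ two_ne_zero] at h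

open scoped MatrixOrder in
lemma exists_posSemidef_smul_one_add_and_sub [Finite n] [DecidableEq n] {M : Matrix n n 𝕜}
    (hM : M.IsHermitian) :
    ∃ c : ℝ, (c • (1 : Matrix n n 𝕜) + M).PosSemidef ∧ (c • (1 : Matrix n n 𝕜) - M).PosSemidef := by
  have := Fintype.ofFinite n
  have hsa : IsSelfAdjoint M := hM
  obtain ⟨c, hc⟩ := (finite_real_spectrum (A := M)).isBounded.exists_norm_le
  refine ⟨c, ?_, ?_⟩
  · have hle : algebraMap ℝ (Matrix n n 𝕜) (-c) ≤ M :=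
      algebraMap_le_of_le_spectrum fun x hx ↦ (abs_le.mp (hc x hx)).1
    rwa [Matrix.le_iff, map_neg, sub_neg_eq_add, add_comm, Algebra.algebraMap_eq_smul_one] at hle
  · have hle : M ≤ algebraMap ℝ (Matrix n n 𝕜) c :=
      le_algebraMap_of_spectrum_le fun x hx ↦ (abs_le.mp (hc x hx)).2
    rwa [Matrix.le_iff, Algebra.algebraMap_eq_smul_one] at hle

end RCLike

lemma ptB_isHermitian {A B : Type*} {M : Matrix (A × B) (A × B) ℂ} (hM : M.IsHermitian) :
    (ptB M).IsHermitian :=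
  .ext fun _ _ ↦ hM.apply _ _

lemma ptB_kronecker {A B : Type*} (P : Matrix A A ℂ) (Q : Matrix B B ℂ) :
    ptB (P ⊗ₖ Q) = P ⊗ₖ Qᵀ :=
  rfl

section Feasible

variable {A B : Type*} [DecidableEq A] [Fintype B]

/-- The traces of the Hermitian `S` with `-(1 ⊗ S) ≤ X^{T_B} ≤ 1 ⊗ S`: the constraint shared by
the three programs. -/
def kronBoundTraces (X : Matrix (A × B) (A × B) ℂ) : Set ℝ :=
  {x | ∃ S : Matrix B B ℂ, S.IsHermitian ∧ x = S.trace.re ∧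
    ((1 : Matrix A A ℂ) ⊗ₖ S + ptB X).PosSemidef ∧ ((1 : Matrix A A ℂ) ⊗ₖ S - ptB X).PosSemidef}

/-- The feasible objective values of the program for `β(J)`. -/
def betaFeasible (J : Matrix (A × B) (A × B) ℂ) : Set ℝ :=
  {x | ∃ R, (R + ptB J).PosSemidef ∧ (R - ptB J).PosSemidef ∧ x ∈ kronBoundTraces R}

/-- The feasible objective values of the program for `ζ(J)`. -/
def zetaFeasible (J : Matrix (A × B) (A × B) ℂ) : Set ℝ :=
  {x | ∃ K, (K - J).PosSemidef ∧ x ∈ kronBoundTraces K}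

/-- The feasible objective values of the program for `υ(J)`. -/
def upsilonFeasible (J : Matrix (A × B) (A × B) ℂ) : Set ℝ :=
  {x | ∃ K, (K - J).PosSemidef ∧ x ∈ betaFeasible K}

lemma kronBoundTraces_nonempty [Finite A] {X : Matrix (A × B) (A × B) ℂ} (hX : X.IsHermitian) :
    (kronBoundTraces X).Nonempty := by
  classical
  obtain ⟨c, hadd, hsub⟩ := exists_posSemidef_smul_one_add_and_sub (ptB_isHermitian hX)
  have hkron : (1 : Matrix A A ℂ) ⊗ₖ (c • (1 : Matrix B B ℂ)) = c • 1 := by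
    rw [kronecker_smul, one_kronecker_one]
  exact ⟨_, c • 1, isHermitian_one.smul (.all c), rfl, hkron ▸ hadd, hkron ▸ hsub⟩

lemma kronBoundTraces_subset_betaFeasible (X : Matrix (A × B) (A × B) ℂ) :
    kronBoundTraces X ⊆ betaFeasible X := by
  rintro _ ⟨S, hS, rfl, hadd, hsub⟩
  have hpos : ((1 : Matrix A A ℂ) ⊗ₖ Sᵀ).PosSemidef := by
    have h := (posSemidef_of_add_of_sub hadd hsub).transpose
    rwa [← kroneckerMap_transpose, transpose_one] at h
  refine ⟨1 ⊗ₖ S, hadd, hsub, Sᵀ, hS.transpose, by rw [trace_transpose], ?_, ?_⟩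
  · rw [ptB_kronecker]
    exact hpos.add hpos
  · rw [ptB_kronecker, sub_self]
    exact .zero

lemma betaFeasible_subset_upsilonFeasible (J : Matrix (A × B) (A × B) ℂ) :
    betaFeasible J ⊆ upsilonFeasible J :=
  fun _ hx ↦ ⟨J, sub_self J ▸ .zero, hx⟩

lemma zetaFeasible_subset_upsilonFeasible (J : Matrix (A × B) (A × B) ℂ) :
    zetaFeasible J ⊆ upsilonFeasible J :=
  fun _ ⟨K, hK, hx⟩ ↦ ⟨K, hK, kronBoundTraces_subset_betaFeasible K hx⟩

lemma betaFeasible_nonempty [Finite A] {J : Matrix (A × B) (A × B) ℂ} (hJ : J.IsHermitian) :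
    (betaFeasible J).Nonempty :=
  (kronBoundTraces_nonempty hJ).mono (kronBoundTraces_subset_betaFeasible J)

lemma zetaFeasible_nonempty [Finite A] {J : Matrix (A × B) (A × B) ℂ} (hJ : J.IsHermitian) :
    (zetaFeasible J).Nonempty :=
  (kronBoundTraces_nonempty hJ).mono fun _ hx ↦ ⟨J, sub_self J ▸ .zero, hx⟩

lemma bddBelow_upsilonFeasible [Nonempty A] (J : Matrix (A × B) (A × B) ℂ) :
    BddBelow (upsilonFeasible J) := by
  refine ⟨0, ?_⟩
  rintro _ ⟨K, -, R, -, -, S, -, rfl, hadd, hsub⟩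
  have hS : S.PosSemidef := posSemidef_of_one_kronecker (posSemidef_of_add_of_sub hadd hsub)
  exact (Complex.nonneg_iff.mp hS.trace_nonneg).1

lemma upsilonFeasible_eq_betaFeasible [IsEmpty A] (J : Matrix (A × B) (A × B) ℂ) :
    upsilonFeasible J = betaFeasible J :=
  Set.Subset.antisymm
    (fun _ ⟨_, _, R, _, _, hx⟩ ↦ ⟨R, posSemidef_of_isEmpty _, posSemidef_of_isEmpty _, hx⟩)
    (betaFeasible_subset_upsilonFeasible J)

lemma upsilonFeasible_eq_zetaFeasible [IsEmpty A] (J : Matrix (A × B) (A × B) ℂ) :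
    upsilonFeasible J = zetaFeasible J :=
  Set.Subset.antisymm
    (fun _ ⟨_, _, R, _, _, hx⟩ ↦ ⟨R, posSemidef_of_isEmpty _, hx⟩)
    (zetaFeasible_subset_upsilonFeasible J)

end Feasible

section Values

variable {A B : Type*} [Fintype A] [DecidableEq A] [Fintype B] [DecidableEq B]

lemma betaVal_eq_sInf (J : Matrix (A × B) (A × B) ℂ) : betaVal J = sInf (betaFeasible J) := by
  refine congrArg sInf (Set.ext fun x ↦ ⟨?_, ?_⟩)
  · rintro ⟨S, hS, hx, R, hadd, hsub, h⟩
    exact ⟨R, hadd, hsub, S, hS, hx, h⟩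
  · rintro ⟨R, hadd, hsub, S, hS, hx, h⟩
    exact ⟨S, hS, hx, R, hadd, hsub, h⟩

lemma zetaVal_eq_sInf (J : Matrix (A × B) (A × B) ℂ) : zetaVal J = sInf (zetaFeasible J) := by
  refine congrArg sInf (Set.ext fun x ↦ ⟨?_, ?_⟩)
  · rintro ⟨S, hS, hx, K, hK, h⟩
    exact ⟨K, hK, S, hS, hx, h⟩
  · rintro ⟨K, hK, S, hS, hx, h⟩
    exact ⟨S, hS, hx, K, hK, h⟩

lemma upsilonVal_eq_sInf (J : Matrix (A × B) (A × B) ℂ) :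
    upsilonVal J = sInf (upsilonFeasible J) := by
  refine congrArg sInf (Set.ext fun x ↦ ⟨?_, ?_⟩)
  · rintro ⟨S, hS, hx, K, R, hK, hadd, hsub, h⟩
    exact ⟨K, hK, R, hadd, hsub, S, hS, hx, h⟩
  · rintro ⟨K, hK, R, hadd, hsub, S, hS, hx, h⟩
    exact ⟨S, hS, hx, K, R, hK, hadd, hsub, h⟩

theorem upsilon_le_beta_zeta_general (J : Matrix (A × B) (A × B) ℂ) (hJ : J.IsHermitian) :
    upsilonVal J ≤ betaVal J ∧ upsilonVal J ≤ zetaVal J := by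
  rw [upsilonVal_eq_sInf, betaVal_eq_sInf, zetaVal_eq_sInf]
  cases isEmpty_or_nonempty A with
  | inl _ =>
    exact ⟨(congrArg sInf (upsilonFeasible_eq_betaFeasible J)).le,
      (congrArg sInf (upsilonFeasible_eq_zetaFeasible J)).le⟩
  | inr _ =>
    have hbdd := bddBelow_upsilonFeasible J
    exact ⟨csInf_le_csInf hbdd (betaFeasible_nonempty hJ) (betaFeasible_subset_upsilonFeasible J),
      csInf_le_csInf hbdd (zetaFeasible_nonempty hJ) (zetaFeasible_subset_upsilonFeasible J)⟩

end Values

/-- `υ(J) ≤ β(J)` and `υ(J) ≤ ζ(J)`, i.e.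
`Υ_max(𝒩) ≤ min{C_β(𝒩), C_ζ(𝒩)}` at the level of SDP values. -/
theorem upsilon_le_beta_zeta {A B : Type*} [Fintype A] [DecidableEq A]
    [Fintype B] [DecidableEq B]
    (J : Matrix (A × B) (A × B) ℂ) (hJ : J.PosSemidef) :
    upsilonVal J ≤ betaVal J ∧ upsilonVal J ≤ zetaVal J :=
  upsilon_le_beta_zeta_general J hJ.isHermitian
end
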